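/- arXiv:1605.01978 — 5 statements merged into one kernel-verified Lean document; each statement's English description precedes it below -/
import Mathlib

section
/- Let G be a simple graph on n vertices with at least one edge, with chromatic number χ(G) and inertia (n⁺, n⁰, n⁻). Then 1 + max(n⁺/n⁻, n⁻/n⁺) ≤ χ(G). (Equivalently, (χ(G) − 1)·n⁻ ≥ n⁺ and (χ(G) − 1)·n⁺ ≥ n⁻.) -/
/-!
Let `A` be the adjacency matrix and `Q(x) = xᵀ A x` its quadratic form, and colour the graph
properly with `k` colours. Take a real `k × k` matrix `M` with orthogonal columns and one row
constantly `1`. Weighting each vertex by the entry of row `i` at its colour gives a diagonal matrix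
`Dᵢ`, and `∑ᵢ Dᵢ A Dᵢ = 0`, since the entry at `(v, w)` is `A v w` times the inner product of two
distinct columns of `M` whenever `v` and `w` are adjacent. The constant row contributes `A` itself,
so `-Q` is a sum of `k - 1` forms `Q ∘ Dᵢ`. The positive index of inertia is subadditive and does
not increase under linear substitution, hence `n⁻ ≤ (k - 1) n⁺`; replacing `A` by `-A` gives
`n⁺ ≤ (k - 1) n⁻`. The matrix `M` is a real substitute for the character table of `ℤ/k`, for which
the `Dᵢ` would be the powers of a diagonal unitary matrix.
-/

open Matrix

/-- The adjacency matrix of a simple graph, viewed over `ℝ`, is Hermitian. -/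
lemma SimpleGraph.adjMatrix_isHermitian {n : ℕ} (G : SimpleGraph (Fin n))
    [DecidableRel G.Adj] : (G.adjMatrix ℝ).IsHermitian := by
  rw [Matrix.IsHermitian, conjTranspose_eq_transpose_of_trivial]
  exact G.isSymm_adjMatrix

/-- `n⁺(G)`: the number of positive eigenvalues (with multiplicity) of the adjacency
matrix of `G`. -/
noncomputable def SimpleGraph.posInertia {n : ℕ} (G : SimpleGraph (Fin n)) : ℕ :=
  letI := Classical.decRel G.Adj
  (Finset.univ.filter fun i => 0 < G.adjMatrix_isHermitian.eigenvalues i).card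

/-- `n⁰(G)`: the number of zero eigenvalues (with multiplicity) of the adjacency
matrix of `G`. -/
noncomputable def SimpleGraph.zeroInertia {n : ℕ} (G : SimpleGraph (Fin n)) : ℕ :=
  letI := Classical.decRel G.Adj
  (Finset.univ.filter fun i => G.adjMatrix_isHermitian.eigenvalues i = 0).card

/-- `n⁻(G)`: the number of negative eigenvalues (with multiplicity) of the adjacency
matrix of `G`. -/
noncomputable def SimpleGraph.negInertia {n : ℕ} (G : SimpleGraph (Fin n)) : ℕ :=
  letI := Classical.decRel G.Adj
  (Finset.univ.filter fun i => G.adjMatrix_isHermitian.eigenvalues i < 0).card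

open QuadraticForm

section Signature

variable {𝕜 M N : Type*} [Field 𝕜] [LinearOrder 𝕜] [AddCommGroup M] [Module 𝕜 M]
  [FiniteDimensional 𝕜 M] [AddCommGroup N] [Module 𝕜 N] [FiniteDimensional 𝕜 N]

lemma sigPos_le_finrank_of_nonpos_on_ker {Q : QuadraticForm 𝕜 M} (f : M →ₗ[𝕜] N)
    (hf : ∀ x, f x = 0 → Q x ≤ 0) : sigPos Q ≤ Module.finrank 𝕜 N := by
  have hker : sigPos Q + Module.finrank 𝕜 f.ker ≤ Module.finrank 𝕜 M :=
    sigPos_add_finrank_le_of_nonpos hf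
  have hrank := f.finrank_range_add_finrank_ker
  have hrange := f.range.finrank_le
  omega

lemma sigPos_zero : sigPos (0 : QuadraticForm 𝕜 M) = 0 :=
  Nat.le_zero.1 <| (sigPos_le_finrank_of_nonpos_on_ker (0 : M →ₗ[𝕜] Fin 0 → 𝕜)
    fun _ _ ↦ le_rfl).trans_eq (Module.finrank_fin_fun 𝕜)

variable [IsStrictOrderedRing 𝕜]

lemma exists_linearMap_nonpos_on_ker (Q : QuadraticForm 𝕜 M) :
    ∃ f : M →ₗ[𝕜] Fin (sigPos Q) → 𝕜, ∀ x, f x = 0 → Q x ≤ 0 := by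
  have : Invertible (2 : 𝕜) := invertibleOfNonzero two_ne_zero
  obtain ⟨w, ⟨e⟩⟩ := Q.equivalent_weightedSumSquares
  have hcard : Nat.card {i | 0 < w i} = sigPos Q := (sigPos_of_equiv_weightedSumSquares ⟨e⟩).symm
  let g : {i | 0 < w i} ≃ Fin (sigPos Q) := Finite.equivFinOfCardEq hcard
  refine ⟨LinearMap.funLeft 𝕜 𝕜 (fun j ↦ (g.symm j : Fin _)) ∘ₗ e.toLinearEquiv.toLinearMap,
    fun x hx ↦ ?_⟩
  rw [← e.map_app, QuadraticMap.weightedSumSquares_apply]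
  refine Finset.sum_nonpos fun i _ ↦ ?_
  obtain hi | hi := le_or_gt (w i) 0
  · exact mul_nonpos_of_nonpos_of_nonneg hi (mul_self_nonneg _)
  · have hxi : e x i = 0 := by simpa [g] using! congrFun hx (g ⟨i, hi⟩)
    simp [hxi]

lemma sigPos_add_le (Q₁ Q₂ : QuadraticForm 𝕜 M) : sigPos (Q₁ + Q₂) ≤ sigPos Q₁ + sigPos Q₂ := by
  obtain ⟨f₁, hf₁⟩ := exists_linearMap_nonpos_on_ker Q₁
  obtain ⟨f₂, hf₂⟩ := exists_linearMap_nonpos_on_ker Q₂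
  have hker (x : M) (hx : f₁.prod f₂ x = 0) : (Q₁ + Q₂) x ≤ 0 :=
    add_nonpos (hf₁ x congr(($hx).1)) (hf₂ x congr(($hx).2))
  simpa using sigPos_le_finrank_of_nonpos_on_ker (f₁.prod f₂) hker

lemma sigPos_sum_le {κ : Type*} (s : Finset κ) (Q : κ → QuadraticForm 𝕜 M) :
    sigPos (∑ i ∈ s, Q i) ≤ ∑ i ∈ s, sigPos (Q i) :=
  Finset.le_sum_of_subadditive _ sigPos_zero.le sigPos_add_le s Q

lemma sigPos_comp_le (Q : QuadraticForm 𝕜 N) (g : M →ₗ[𝕜] N) : sigPos (Q.comp g) ≤ sigPos Q := by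
  obtain ⟨f, hf⟩ := exists_linearMap_nonpos_on_ker Q
  simpa using sigPos_le_finrank_of_nonpos_on_ker (f ∘ₗ g) fun x hx ↦ hf (g x) hx

lemma sigNeg_le_card_mul_sigPos_of_add_sum_comp_eq_zero {κ : Type*} {Q : QuadraticForm 𝕜 M}
    {s : Finset κ} {g : κ → M →ₗ[𝕜] M} (h : Q + ∑ i ∈ s, Q.comp (g i) = 0) :
    sigNeg Q ≤ s.card * sigPos Q :=
  calc sigNeg Q = sigPos (∑ i ∈ s, Q.comp (g i)) := by
        rw [← sigPos_neg, neg_eq_of_add_eq_zero_right h]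
    _ ≤ ∑ i ∈ s, sigPos (Q.comp (g i)) := sigPos_sum_le s _
    _ ≤ s.card * sigPos Q := Finset.sum_le_card_nsmul s _ _ fun i _ ↦ sigPos_comp_le Q (g i)

end Signature

section QuadraticFormOfMatrix

variable {V R : Type*} [Fintype V] [DecidableEq V] [CommRing R]

lemma toQuadraticForm'_apply (A : Matrix V V R) (x : V → R) :
    A.toQuadraticForm' x = x ⬝ᵥ A *ᵥ x :=
  toLinearMap₂'_apply' A x x

lemma toQuadraticForm'_comp_toLin' {W : Type*} [Fintype W] [DecidableEq W] (A : Matrix V V R)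
    (P : Matrix V W R) :
    A.toQuadraticForm'.comp (toLin' P) = (Pᵀ * A * P).toQuadraticForm' := by
  rw [toQuadraticForm', toQuadraticForm', ← toLinearMap₂'_comp]
  rfl

lemma toQuadraticForm'_diagonal (μ : V → R) :
    (diagonal μ).toQuadraticForm' = QuadraticMap.weightedSumSquares R μ := by
  ext x
  simp only [toQuadraticForm'_apply, QuadraticMap.weightedSumSquares_apply, dotProduct,
    mulVec_diagonal, smul_eq_mul, mul_left_comm]

lemma toQuadraticForm'_sum {κ : Type*} (s : Finset κ) (A : κ → Matrix V V R) :
    (∑ i ∈ s, A i).toQuadraticForm' = ∑ i ∈ s, (A i).toQuadraticForm' := by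
  ext x
  simp only [toQuadraticForm'_apply, sum_mulVec, dotProduct_sum, _root_.sum_apply]

lemma toQuadraticForm'_neg (A : Matrix V V R) :
    (-A).toQuadraticForm' = -A.toQuadraticForm' := by
  ext x
  simp only [toQuadraticForm'_apply, neg_mulVec, dotProduct_neg, _root_.neg_apply]

variable {A : Matrix V V ℝ} (hA : A.IsHermitian)
include hA

lemma equivalent_weightedSumSquares_eigenvalues :
    A.toQuadraticForm'.Equivalent (QuadraticMap.weightedSumSquares ℝ hA.eigenvalues) := by
  have hdiag : (hA.eigenvectorUnitary : Matrix V V ℝ)ᵀ * A * hA.eigenvectorUnitary =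
      diagonal hA.eigenvalues :=
    hA.conjStarAlgAut_star_eigenvectorUnitary
  have hcomp : A.toQuadraticForm'.comp (toLin' hA.eigenvectorUnitary.1) =
      QuadraticMap.weightedSumSquares ℝ hA.eigenvalues := by
    rw [toQuadraticForm'_comp_toLin', hdiag, toQuadraticForm'_diagonal]
  exact QuadraticMap.Equivalent.symm
    ⟨UnitaryGroup.toLinearEquiv hA.eigenvectorUnitary, fun x ↦ congr($hcomp x)⟩

lemma sigPos_toQuadraticForm'_eq_card_pos_eigenvalues :
    sigPos A.toQuadraticForm' = (Finset.univ.filter fun i ↦ 0 < hA.eigenvalues i).card := by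
  rw [sigPos_of_equiv_weightedSumSquares (equivalent_weightedSumSquares_eigenvalues hA),
    ← Set.ncard_coe_finset, Finset.coe_filter_univ]

lemma sigNeg_toQuadraticForm'_eq_card_neg_eigenvalues :
    sigNeg A.toQuadraticForm' = (Finset.univ.filter fun i ↦ hA.eigenvalues i < 0).card := by
  rw [sigNeg_of_equiv_weightedSumSquares (equivalent_weightedSumSquares_eigenvalues hA),
    ← Set.ncard_coe_finset, Finset.coe_filter_univ]

end QuadraticFormOfMatrix

section Coloring

variable {V ι : Type*} [Fintype V] [DecidableEq V]

lemma exists_hasOrthogonalCols_row_eq_one [Fintype ι] (i₀ : ι) :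
    ∃ M : Matrix ι ι ℝ, M i₀ = 1 ∧ M.HasOrthogonalCols := by
  classical
  have : Nonempty ι := ⟨i₀⟩
  let r : ℝ := √(Fintype.card ι)
  have hr : r ≠ 0 := by positivity
  let u : EuclideanSpace ℝ ι := WithLp.toLp 2 fun _ ↦ r⁻¹
  have hu : ‖u‖ = 1 := by simp [u, r, EuclideanSpace.norm_eq]
  obtain ⟨b, hb⟩ := Orthonormal.exists_orthonormalBasis_extension_of_card_eq
    (v := fun _ ↦ u) (s := {i₀}) finrank_euclideanSpace
    (orthonormal_subsingleton_iff.2 fun _ ↦ hu)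
  refine ⟨Matrix.of fun i j ↦ r * b i j, ?_, fun j k hjk ↦ ?_⟩
  · ext j
    simp [hb i₀ rfl, u, hr]
  · -- Orthonormal rows force orthonormal columns: Parseval for the coordinate vectors.
    have hbjk : ∑ i, b i j * b i k = 0 := by
      simpa [EuclideanSpace.inner_single_left, EuclideanSpace.inner_single_right, hjk] using
        b.sum_inner_mul_inner (EuclideanSpace.single j 1) (EuclideanSpace.single k 1)
    calc ∑ i, r * b i j * (r * b i k) = r ^ 2 * ∑ i, b i j * b i k := by
          rw [Finset.mul_sum]
          exact Finset.sum_congr rfl fun i _ ↦ by ring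
      _ = 0 := by rw [hbjk, mul_zero]

lemma sum_diagonal_mul_mul_diagonal_eq_zero {κ R : Type*} [Fintype κ] [CommSemiring R]
    {A : Matrix V V R} {c : V → ι} (hc : ∀ v w, A v w ≠ 0 → c v ≠ c w) {M : Matrix κ ι R}
    (hM : M.HasOrthogonalCols) :
    ∑ i, diagonal (M i ∘ c) * A * diagonal (M i ∘ c) = 0 := by
  ext v w
  have hentry : (∑ i, diagonal (M i ∘ c) * A * diagonal (M i ∘ c)) v w =
      A v w * ∑ i, M i (c v) * M i (c w) := by
    simp only [Matrix.sum_apply, mul_diagonal, diagonal_mul, Function.comp_apply, Finset.mul_sum]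
    exact Finset.sum_congr rfl fun i _ ↦ by ring
  rw [hentry, Matrix.zero_apply]
  by_cases h : A v w = 0
  · rw [h, zero_mul]
  · exact mul_eq_zero_of_right _ (hM (hc v w h))

lemma sum_toQuadraticForm'_comp_diagonal_eq_zero {κ R : Type*} [Fintype κ] [CommRing R]
    {A : Matrix V V R} {c : V → ι} (hc : ∀ v w, A v w ≠ 0 → c v ≠ c w) {M : Matrix κ ι R}
    (hM : M.HasOrthogonalCols) :
    ∑ i, A.toQuadraticForm'.comp (toLin' (diagonal (M i ∘ c))) = 0 := by
  simp only [toQuadraticForm'_comp_toLin', diagonal_transpose]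
  rw [← toQuadraticForm'_sum, sum_diagonal_mul_mul_diagonal_eq_zero hc hM]
  ext x
  simp only [toQuadraticForm'_apply, zero_mulVec, dotProduct_zero, _root_.zero_apply]

lemma sigNeg_toQuadraticForm'_le_mul_sigPos [Fintype ι] [Nonempty ι] {A : Matrix V V ℝ} {c : V → ι}
    (hc : ∀ v w, A v w ≠ 0 → c v ≠ c w) :
    sigNeg A.toQuadraticForm' ≤ (Fintype.card ι - 1) * sigPos A.toQuadraticForm' := by
  classical
  obtain ⟨i₀⟩ := ‹Nonempty ι›
  obtain ⟨M, hM₀, hM⟩ := exists_hasOrthogonalCols_row_eq_one i₀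
  have hcomp : A.toQuadraticForm'.comp (toLin' (diagonal (M i₀ ∘ c))) = A.toQuadraticForm' := by
    ext x
    simp [hM₀]
  have hsum := sum_toQuadraticForm'_comp_diagonal_eq_zero hc hM
  rw [← Finset.add_sum_erase _ _ (Finset.mem_univ i₀), hcomp] at hsum
  simpa using sigNeg_le_card_mul_sigPos_of_add_sum_comp_eq_zero hsum

lemma sigPos_toQuadraticForm'_le_mul_sigNeg [Fintype ι] [Nonempty ι] {A : Matrix V V ℝ} {c : V → ι}
    (hc : ∀ v w, A v w ≠ 0 → c v ≠ c w) :
    sigPos A.toQuadraticForm' ≤ (Fintype.card ι - 1) * sigNeg A.toQuadraticForm' := by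
  have hcneg (v w : V) (h : (-A) v w ≠ 0) : c v ≠ c w := hc v w (neg_ne_zero.1 h)
  simpa [toQuadraticForm'_neg] using sigNeg_toQuadraticForm'_le_mul_sigPos hcneg

end Coloring

theorem inertial_chromatic_bound_general {V : Type*} [Fintype V] [DecidableEq V]
    (G : SimpleGraph V) {A : Matrix V V ℝ} (hA : A.IsHermitian) (hA₀ : A ≠ 0)
    (hAG : ∀ v w, A v w ≠ 0 → G.Adj v w) :
    1 + max
      (((Finset.univ.filter fun i ↦ 0 < hA.eigenvalues i).card : ℝ) /
        (Finset.univ.filter fun i ↦ hA.eigenvalues i < 0).card)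
      (((Finset.univ.filter fun i ↦ hA.eigenvalues i < 0).card : ℝ) /
        (Finset.univ.filter fun i ↦ 0 < hA.eigenvalues i).card) ≤
      (G.chromaticNumber.toNat : ℝ) := by
  obtain ⟨C⟩ := G.colorable_chromaticNumber_of_fintype
  obtain ⟨v, -⟩ := Function.ne_iff.1 hA₀
  have : Nonempty (Fin G.chromaticNumber.toNat) := ⟨C v⟩
  have hC (v w : V) (h : A v w ≠ 0) : C v ≠ C w := C.valid (hAG v w h)
  have hneg := sigNeg_toQuadraticForm'_le_mul_sigPos hC
  have hpos := sigPos_toQuadraticForm'_le_mul_sigNeg hC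
  rw [sigPos_toQuadraticForm'_eq_card_pos_eigenvalues hA,
    sigNeg_toQuadraticForm'_eq_card_neg_eigenvalues hA, Fintype.card_fin] at hneg hpos
  have hcast : ((G.chromaticNumber.toNat - 1 : ℕ) : ℝ) = G.chromaticNumber.toNat - 1 :=
    Nat.cast_pred (Fin.pos (C v))
  rw [← le_sub_iff_add_le', ← hcast]
  exact max_le (div_le_of_le_mul₀ (by positivity) (by positivity) (mod_cast hpos))
    (div_le_of_le_mul₀ (by positivity) (by positivity) (mod_cast hneg))

theorem inertial_chromatic_bound {n : ℕ} (G : SimpleGraph (Fin n))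
    (hE : ∃ v w, G.Adj v w) :
    1 + max ((G.posInertia : ℝ) / (G.negInertia : ℝ))
        ((G.negInertia : ℝ) / (G.posInertia : ℝ)) ≤ (G.chromaticNumber.toNat : ℝ) := by
  classical
  obtain ⟨v, w, hvw⟩ := hE
  have hA₀ : G.adjMatrix ℝ ≠ 0 := fun h ↦ by simpa [hvw] using congr($h v w)
  exact inertial_chromatic_bound_general G G.adjMatrix_isHermitian hA₀ (by simp)
end

section
/- Let G be a simple graph on n ≥ 1 vertices with chromatic number χ(G) and inertia (n⁺, n⁰, n⁻). Then max(n⁺, n⁻) ≤ n(χ(G) − 1)/χ(G), i.e., χ(G)·max(n⁺, n⁻) ≤ n·(χ(G) − 1). -/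
open Matrix

/-!
A set of pairwise non-adjacent vertices spans a coordinate subspace on which the quadratic form
`x ↦ xᵀ A x` of the adjacency matrix vanishes identically. Such a subspace meets every subspace on
which the form is definite only in `0`, and by Sylvester's law of inertia there is a positive
definite subspace of dimension `n⁺` and a negative definite one of dimension `n⁻`. Hence
`max(n⁺, n⁻) + |S| ≤ n` for every independent set `S` (Cvetković's inertia bound). Summing over the
`χ` colour classes of an optimal colouring gives `χ · max(n⁺, n⁻) + n ≤ χ · n`.
-/

open QuadraticForm QuadraticMap

section Signature

variable {𝕜 M : Type*} [Field 𝕜] [LinearOrder 𝕜] [AddCommGroup M] [Module 𝕜 M]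
  [FiniteDimensional 𝕜 M] {Q : QuadraticForm 𝕜 M} {W : Submodule 𝕜 M}

lemma max_sigPos_sigNeg_add_finrank_le_of_eq_zero (hW : ∀ x ∈ W, Q x = 0) :
    max (sigPos Q) (sigNeg Q) + Module.finrank 𝕜 W ≤ Module.finrank 𝕜 M := by
  have hpos : sigPos Q + Module.finrank 𝕜 W ≤ Module.finrank 𝕜 M :=
    sigPos_add_finrank_le_of_nonpos fun x hx => (hW x hx).le
  have hneg : sigNeg Q + Module.finrank 𝕜 W ≤ Module.finrank 𝕜 M := by
    rw [← sigPos_neg]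
    exact sigPos_add_finrank_le_of_nonpos fun x hx => by simp [hW x hx]
  rw [max_add]
  exact max_le hpos hneg

end Signature

section Matrix

variable {ι : Type*} [Fintype ι] [DecidableEq ι]

lemma toQuadraticForm'_eq_zero_of_mem_spanSubset {R : Type*} [CommRing R] {A : Matrix ι ι R}
    {S : Set ι} (hS : ∀ i ∈ S, ∀ j ∈ S, A i j = 0) {x : ι → R} (hx : x ∈ Pi.spanSubset R S) :
    A.toQuadraticForm' x = 0 := by
  rw [Pi.mem_spanSubset_iff] at hx
  simp only [toQuadraticForm', LinearMap.BilinMap.toQuadraticMap_apply, toLinearMap₂'_apply]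
  refine Finset.sum_eq_zero fun i _ => Finset.sum_eq_zero fun j _ => ?_
  by_cases hi : i ∈ S
  · by_cases hj : j ∈ S
    · simp [hS i hi j hj]
    · simp [hx j hj]
  · simp [hx i hi]

lemma max_sigPos_sigNeg_toQuadraticForm'_add_ncard_le {𝕜 : Type*} [Field 𝕜]
    [LinearOrder 𝕜] {A : Matrix ι ι 𝕜} {S : Set ι} (hS : ∀ i ∈ S, ∀ j ∈ S, A i j = 0) :
    max (sigPos A.toQuadraticForm') (sigNeg A.toQuadraticForm') + S.ncard ≤ Fintype.card ι := by
  simpa only [Pi.dim_spanSubset, Module.finrank_fintype_fun_eq_card] using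
    max_sigPos_sigNeg_add_finrank_le_of_eq_zero (W := Pi.spanSubset 𝕜 S)
      fun _ hx => toQuadraticForm'_eq_zero_of_mem_spanSubset hS hx

lemma toQuadraticForm'_equivalent_weightedSumSquares_eigenvalues {A : Matrix ι ι ℝ}
    (hA : A.IsHermitian) :
    A.toQuadraticForm'.Equivalent (weightedSumSquares ℝ hA.eigenvalues) := by
  let b : Module.Basis ι ℝ (ι → ℝ) :=
    hA.eigenvectorBasis.toBasis.map (WithLp.linearEquiv 2 ℝ (ι → ℝ))
  have hAb (i j : ι) :
      A.toLinearMap₂' ℝ (b i) (b j) = if i = j then hA.eigenvalues j else 0 := by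
    have hbb : b i ⬝ᵥ b j = if i = j then 1 else 0 := by
      rw [← orthonormal_iff_ite.1 hA.eigenvectorBasis.orthonormal i j,
        EuclideanSpace.inner_eq_star_dotProduct, dotProduct_comm]
      simp [b]
    calc A.toLinearMap₂' ℝ (b i) (b j)
      _ = b i ⬝ᵥ (A *ᵥ b j) := toLinearMap₂'_apply' A _ _
      _ = b i ⬝ᵥ (hA.eigenvalues j • b j) := by simp [b, hA.mulVec_eigenvectorBasis]
      _ = if i = j then hA.eigenvalues j else 0 := by simp [dotProduct_smul, hbb]
  have hortho : (associated (R := ℝ) A.toQuadraticForm').IsOrthoᵢ b := by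
    intro i j hij
    rw [Function.onFun, associated_isOrtho, isOrtho_def]
    simp [toQuadraticForm', hAb, hij, hij.symm]
  have hdiag : A.toQuadraticForm'.basisRepr b = weightedSumSquares ℝ hA.eigenvalues := by
    rw [basisRepr_eq_of_iIsOrtho _ _ hortho]
    simp [toQuadraticForm', hAb]
  exact hdiag ▸ ⟨isometryEquivBasisRepr _ b⟩

end Matrix

section Coloring

variable {V α : Type*} [Fintype V] [Fintype α] {G : SimpleGraph V}

lemma sum_ncard_colorClass (C : G.Coloring α) :
    ∑ c, (C.colorClass c).ncard = Fintype.card V := by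
  classical
  simp only [SimpleGraph.Coloring.colorClass, Set.ncard_eq_toFinset_card', Set.toFinset_ofPred]
  exact (Finset.card_eq_sum_card_fiberwise fun v _ => Finset.mem_univ (C v)).symm

lemma card_mul_max_sigPos_sigNeg_toQuadraticForm'_add_card_le [DecidableEq V] {𝕜 : Type*} [Field 𝕜]
    [LinearOrder 𝕜] (C : G.Coloring α) {A : Matrix V V 𝕜} (hAG : ∀ v w, ¬G.Adj v w → A v w = 0) :
    Fintype.card α * max (sigPos A.toQuadraticForm') (sigNeg A.toQuadraticForm') + Fintype.card V
      ≤ Fintype.card α * Fintype.card V := by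
  set p := max (sigPos A.toQuadraticForm') (sigNeg A.toQuadraticForm')
  calc Fintype.card α * p + Fintype.card V
    _ = ∑ c, (p + (C.colorClass c).ncard) := by
      simp [Finset.sum_add_distrib, sum_ncard_colorClass]
    _ ≤ ∑ _c : α, Fintype.card V := Finset.sum_le_sum fun c _ =>
      max_sigPos_sigNeg_toQuadraticForm'_add_ncard_le fun v hv w hw =>
        hAG v w (C.not_adj_of_mem_colorClass hv hw)
    _ = Fintype.card α * Fintype.card V := by simp

end Coloring

theorem chromatic_mul_max_inertia_le_general {V : Type*} [Fintype V] [DecidableEq V]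
    (G : SimpleGraph V) {A : Matrix V V ℝ} (hA : A.IsHermitian)
    (hAG : ∀ v w, ¬G.Adj v w → A v w = 0) :
    G.chromaticNumber.toNat *
        max {i | 0 < hA.eigenvalues i}.ncard {i | hA.eigenvalues i < 0}.ncard
      ≤ Fintype.card V * (G.chromaticNumber.toNat - 1) := by
  obtain ⟨C⟩ := G.colorable_chromaticNumber_of_fintype
  have hequiv := toQuadraticForm'_equivalent_weightedSumSquares_eigenvalues hA
  have hsum := card_mul_max_sigPos_sigNeg_toQuadraticForm'_add_card_le C hAG
  rw [Fintype.card_fin, sigPos_of_equiv_weightedSumSquares hequiv,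
    sigNeg_of_equiv_weightedSumSquares hequiv, mul_comm _ (Fintype.card V)] at hsum
  rw [Nat.mul_sub_one]
  exact Nat.le_sub_of_add_le hsum

/-- **Corollary.** For a graph `G` on `n ≥ 1` vertices with chromatic number `χ` and inertia
`(n⁺, n⁰, n⁻)`, we have `χ · max(n⁺, n⁻) ≤ n · (χ - 1)`. -/
theorem chromatic_mul_max_inertia_le {n : ℕ} (hn : 1 ≤ n) (G : SimpleGraph (Fin n)) :
    G.chromaticNumber.toNat * max G.posInertia G.negInertia
      ≤ n * (G.chromaticNumber.toNat - 1) := by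
  classical
  simpa [SimpleGraph.posInertia, SimpleGraph.negInertia, Set.ncard_eq_toFinset_card'] using
    chromatic_mul_max_inertia_le_general G G.adjMatrix_isHermitian (by simp)
end

section
/- Let G be a simple graph on n vertices with adjacency matrix A = (a_{kℓ}), and let W = (w_{kℓ}) be an n×n Hermitian complex matrix such that w_{kℓ} = 0 whenever a_{kℓ} = 0 (i.e., the support of W is contained in the edge set of G). Let n⁺(W) and n⁻(W) denote the numbers of positive and negative eigenvalues of W counted with multiplicity, and suppose both are nonzero. Then 1 + max(n⁺(W)/n⁻(W), n⁻(W)/n⁺(W)) ≤ χ(G). -/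
open Matrix

/-!
If the Hermitian form of `W` vanishes on a subspace `S`, then `dim W(S) ≤ n⁺(W)`: a vector of `S`
orthogonal to all eigenvectors with positive eigenvalue has `⟨x, W x⟩ = 0` as a sum of nonpositive
terms, so all these terms vanish and `W x = 0`. The coordinate subspace of a colour class is such an
`S`, and these subspaces span the whole space, so `n⁺(W) + n⁻(W) = rank W ≤ χ(G) * n⁺(W)`. By
symmetry the same holds with `n⁻(W)` on the right.
-/

section Rank

variable {K m m' n α : Type*} [Field K] [Fintype n]

lemma rank_le_rank_of_mulVec_eq_zero_imp {A : Matrix m n K} {B : Matrix m' n K}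
    (h : ∀ x, B *ᵥ x = 0 → A *ᵥ x = 0) : A.rank ≤ B.rank := by
  have hker : B.mulVecLin.ker ≤ A.mulVecLin.ker := h
  have hA := A.mulVecLin.finrank_range_add_finrank_ker
  have hB := B.mulVecLin.finrank_range_add_finrank_ker
  have := Submodule.finrank_mono hker
  unfold Matrix.rank
  omega

lemma rank_sum_le_sum_rank [Finite m] (s : Finset α) (A : α → Matrix m n K) :
    (∑ a ∈ s, A a).rank ≤ ∑ a ∈ s, (A a).rank := by
  have hrank (B : Matrix m n K) : (B.rank : Cardinal) = LinearMap.rank B.mulVecLin :=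
    Module.finrank_eq_rank K _
  have h := LinearMap.rank_finsetSum_le s fun a => (A a).mulVecLin
  have hsum : ∑ a ∈ s, (A a).mulVecLin = (∑ a ∈ s, A a).mulVecLin := by
    ext x
    simp
  rw [hsum] at h
  simp_rw [← hrank] at h
  exact_mod_cast h

end Rank

section FiberProjection

variable {R n α : Type*} [Semiring R] [DecidableEq n] [DecidableEq α]

variable (R) in
/-- The diagonal projection onto the coordinates `k` with `f k = a`: for a colouring `f`, the
coordinate subspace of the colour class `a`. -/
def fiberProjection (f : n → α) (a : α) : Matrix n n R :=
  diagonal fun k => if f k = a then 1 else 0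

lemma sum_fiberProjection [Fintype α] (f : n → α) : ∑ a, fiberProjection R f a = 1 := by
  ext k l
  simp [fiberProjection, Matrix.sum_apply, diagonal_apply, one_apply]

lemma conjTranspose_fiberProjection_mul_mul_eq_zero [Fintype n] [StarRing R] {f : n → α}
    {W : Matrix n n R} (hf : ∀ k l, f k = f l → W k l = 0) (a : α) :
    (fiberProjection R f a)ᴴ * W * fiberProjection R f a = 0 := by
  ext k l
  simp only [fiberProjection, diagonal_conjTranspose, mul_diagonal, diagonal_mul]
  by_cases hk : f k = a <;> by_cases hl : f l = a <;> simp [hk, hl, hf]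

lemma rank_le_sum_rank_mul_fiberProjection {K : Type*} [Field K] [Fintype n] [Fintype α]
    (A : Matrix n n K) (f : n → α) : A.rank ≤ ∑ a, (A * fiberProjection K f a).rank := by
  calc A.rank = (∑ a, A * fiberProjection K f a).rank := by
        rw [← Finset.mul_sum, sum_fiberProjection, mul_one]
    _ ≤ ∑ a, (A * fiberProjection K f a).rank := rank_sum_le_sum_rank _ _

end FiberProjection

section Inertia

open scoped ComplexOrder

variable {𝕜 ι m V α : Type*} [RCLike 𝕜] [Fintype ι] [DecidableEq ι] [Fintype m]
  [Fintype V] {d : ι → ℝ} {W : Matrix V V 𝕜}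

lemma star_dotProduct_diagonal_mulVec (d : ι → ℝ) (z : ι → 𝕜) :
    star z ⬝ᵥ (diagonal (fun j => (d j : 𝕜)) *ᵥ z) = ((∑ j, d j * ‖z j‖ ^ 2 : ℝ) : 𝕜) := by
  simp only [dotProduct, mulVec_diagonal, Pi.star_apply, RCLike.star_def, RCLike.ofReal_sum,
    RCLike.ofReal_mul, RCLike.ofReal_pow, ← RCLike.conj_mul]
  exact Finset.sum_congr rfl fun j _ => by ring

lemma diagonal_mulVec_eq_zero_of_nonneg {z : ι → 𝕜} (hz : ∀ j, 0 < d j → z j = 0)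
    (hnonneg : 0 ≤ star z ⬝ᵥ (diagonal (fun j => (d j : 𝕜)) *ᵥ z)) :
    diagonal (fun j => (d j : 𝕜)) *ᵥ z = 0 := by
  rw [star_dotProduct_diagonal_mulVec, RCLike.ofReal_nonneg] at hnonneg
  have hterm (j : ι) : d j * ‖z j‖ ^ 2 ≤ 0 := by
    rcases lt_or_ge 0 (d j) with hj | hj
    · simp [hz j hj]
    · exact mul_nonpos_of_nonpos_of_nonneg hj (sq_nonneg _)
  have hsum : ∑ j, d j * ‖z j‖ ^ 2 = 0 :=
    (Finset.sum_nonpos fun j _ => hterm j).antisymm hnonneg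
  have hzero := (Finset.sum_eq_zero_iff_of_nonpos fun j _ => hterm j).mp hsum
  ext j
  simpa [mulVec_diagonal] using hzero j (Finset.mem_univ j)

lemma rank_diagonal_mul_le_card_pos {Y : Matrix ι m 𝕜}
    (hY : (Yᴴ * diagonal (fun j => (d j : 𝕜)) * Y).PosSemidef) :
    (diagonal (fun j => (d j : 𝕜)) * Y).rank ≤ (Finset.univ.filter fun j => 0 < d j).card := by
  let Ypos : Matrix {j // 0 < d j} m 𝕜 := Y.submatrix Subtype.val id
  calc (diagonal (fun j => (d j : 𝕜)) * Y).rank ≤ Ypos.rank := by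
        refine rank_le_rank_of_mulVec_eq_zero_imp fun x hx => ?_
        rw [← mulVec_mulVec]
        refine diagonal_mulVec_eq_zero_of_nonneg (fun j hj => congrFun hx ⟨j, hj⟩) ?_
        simpa only [star_mulVec, ← dotProduct_mulVec, mulVec_mulVec, Matrix.mul_assoc]
          using hY.dotProduct_mulVec_nonneg x
    _ ≤ Fintype.card {j // 0 < d j} := Ypos.rank_le_card_height
    _ = (Finset.univ.filter fun j => 0 < d j).card := Fintype.card_subtype _

lemma rank_mul_le_card_pos_of_eq_mul_diagonal_mul {P : Matrix V ι 𝕜} {X : Matrix V m 𝕜}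
    (hW : W = P * diagonal (fun j => (d j : 𝕜)) * Pᴴ) (hX : (Xᴴ * W * X).PosSemidef) :
    (W * X).rank ≤ (Finset.univ.filter fun j => 0 < d j).card := by
  subst hW
  calc (P * diagonal (fun j => (d j : 𝕜)) * Pᴴ * X).rank
      = (P * (diagonal (fun j => (d j : 𝕜)) * (Pᴴ * X))).rank := by simp only [Matrix.mul_assoc]
    _ ≤ (diagonal (fun j => (d j : 𝕜)) * (Pᴴ * X)).rank := rank_mul_le_right _ _
    _ ≤ (Finset.univ.filter fun j => 0 < d j).card := rank_diagonal_mul_le_card_pos <| by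
        simpa only [conjTranspose_mul, conjTranspose_conjTranspose, Matrix.mul_assoc] using hX

variable [DecidableEq V]

lemma rank_mul_le_card_pos_eigenvalues (hW : W.IsHermitian) {X : Matrix V m 𝕜}
    (hX : (Xᴴ * W * X).PosSemidef) :
    (W * X).rank ≤ (Finset.univ.filter fun i => 0 < hW.eigenvalues i).card :=
  rank_mul_le_card_pos_of_eq_mul_diagonal_mul hW.spectral_theorem hX

lemma rank_mul_le_card_neg_eigenvalues (hW : W.IsHermitian) {X : Matrix V m 𝕜}
    (hX : (-(Xᴴ * W * X)).PosSemidef) :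
    (W * X).rank ≤ (Finset.univ.filter fun i => hW.eigenvalues i < 0).card := by
  have hdiag : diagonal (fun i => ((-hW.eigenvalues i : ℝ) : 𝕜)) =
      -diagonal (fun i => (hW.eigenvalues i : 𝕜)) := by
    simp only [RCLike.ofReal_neg, diagonal_neg]
  have hneg : -W = (hW.eigenvectorUnitary : Matrix V V 𝕜) *
      diagonal (fun i => ((-hW.eigenvalues i : ℝ) : 𝕜)) *
      (hW.eigenvectorUnitary : Matrix V V 𝕜)ᴴ := by
    rw [hdiag, Matrix.mul_neg, Matrix.neg_mul]
    exact congrArg Neg.neg hW.spectral_theorem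
  have h := rank_mul_le_card_pos_of_eq_mul_diagonal_mul (X := X) hneg <| by
    simpa only [Matrix.mul_neg, Matrix.neg_mul] using hX
  simp only [Matrix.neg_mul, Left.neg_pos_iff] at h
  refine le_trans (rank_le_rank_of_mulVec_eq_zero_imp fun x hx => ?_) h
  simpa only [neg_mulVec, neg_eq_zero] using hx

lemma card_pos_add_card_neg_eigenvalues (hW : W.IsHermitian) :
    (Finset.univ.filter fun i => 0 < hW.eigenvalues i).card +
      (Finset.univ.filter fun i => hW.eigenvalues i < 0).card = W.rank := by
  have hdisj : Disjoint (Finset.univ.filter fun i => 0 < hW.eigenvalues i)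
      (Finset.univ.filter fun i => hW.eigenvalues i < 0) :=
    Finset.disjoint_filter.mpr fun _ _ hi => hi.not_gt
  rw [hW.rank_eq_card_non_zero_eigs, Fintype.card_subtype, ← Finset.card_union_of_disjoint hdisj,
    ← Finset.filter_or]
  simp only [ne_iff_lt_or_gt, or_comm]

variable [Fintype α] {f : V → α}

lemma rank_le_card_mul_card_pos_eigenvalues (hW : W.IsHermitian)
    (hf : ∀ k l, f k = f l → W k l = 0) :
    W.rank ≤ Fintype.card α * (Finset.univ.filter fun i => 0 < hW.eigenvalues i).card := by
  classical
  calc W.rank ≤ ∑ a, (W * fiberProjection 𝕜 f a).rank := rank_le_sum_rank_mul_fiberProjection W f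
    _ ≤ Fintype.card α • (Finset.univ.filter fun i => 0 < hW.eigenvalues i).card :=
        Finset.sum_le_card_nsmul _ _ _ fun a _ => rank_mul_le_card_pos_eigenvalues hW <| by
          rw [conjTranspose_fiberProjection_mul_mul_eq_zero hf]
          exact .zero

lemma rank_le_card_mul_card_neg_eigenvalues (hW : W.IsHermitian)
    (hf : ∀ k l, f k = f l → W k l = 0) :
    W.rank ≤ Fintype.card α * (Finset.univ.filter fun i => hW.eigenvalues i < 0).card := by
  classical
  calc W.rank ≤ ∑ a, (W * fiberProjection 𝕜 f a).rank := rank_le_sum_rank_mul_fiberProjection W f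
    _ ≤ Fintype.card α • (Finset.univ.filter fun i => hW.eigenvalues i < 0).card :=
        Finset.sum_le_card_nsmul _ _ _ fun a _ => rank_mul_le_card_neg_eigenvalues hW <| by
          rw [conjTranspose_fiberProjection_mul_mul_eq_zero hf, neg_zero]
          exact .zero

theorem inertial_bound_weighted_general (G : SimpleGraph V) (hW : W.IsHermitian)
    (hsupp : ∀ k l, ¬G.Adj k l → W k l = 0)
    (hpos : ∃ i, 0 < hW.eigenvalues i) (hneg : ∃ i, hW.eigenvalues i < 0) :
    1 + max
        (((Finset.univ.filter fun i => 0 < hW.eigenvalues i).card : ℝ) /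
          (Finset.univ.filter fun i => hW.eigenvalues i < 0).card)
        (((Finset.univ.filter fun i => hW.eigenvalues i < 0).card : ℝ) /
          (Finset.univ.filter fun i => 0 < hW.eigenvalues i).card)
      ≤ G.chromaticNumber.toNat := by
  obtain ⟨C⟩ := SimpleGraph.colorable_chromaticNumber G.colorable_of_fintype
  have hC (k l : V) (hkl : C k = C l) : W k l = 0 := hsupp k l fun hadj => C.valid hadj hkl
  have hrank := card_pos_add_card_neg_eigenvalues hW
  have hrank_pos := rank_le_card_mul_card_pos_eigenvalues hW hC
  have hrank_neg := rank_le_card_mul_card_neg_eigenvalues hW hC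
  rw [← hrank, Fintype.card_fin] at hrank_pos hrank_neg
  have hnpos : 0 < (Finset.univ.filter fun i => 0 < hW.eigenvalues i).card := by
    simpa [Finset.card_pos, Finset.filter_nonempty_iff] using hpos
  have hnneg : 0 < (Finset.univ.filter fun i => hW.eigenvalues i < 0).card := by
    simpa [Finset.card_pos, Finset.filter_nonempty_iff] using hneg
  set npos := (Finset.univ.filter fun i => 0 < hW.eigenvalues i).card
  set nneg := (Finset.univ.filter fun i => hW.eigenvalues i < 0).card
  set χ := G.chromaticNumber.toNat
  have hsum_le_pos : (npos + nneg : ℝ) ≤ χ * npos := mod_cast hrank_pos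
  have hsum_le_neg : (npos + nneg : ℝ) ≤ χ * nneg := mod_cast hrank_neg
  rw [← le_sub_iff_add_le', max_le_iff, div_le_iff₀ (mod_cast hnneg), div_le_iff₀ (mod_cast hnpos)]
  constructor <;> linarith

end Inertia

/-- **Corollary.** Let `G` be a simple graph on `n` vertices and let `W` be a Hermitian
complex matrix whose support is contained in the edge set of `G` (i.e. `W k l = 0`
whenever the adjacency matrix entry `a k l = 0`).  If `W` has at least one positive and
at least one negative eigenvalue, then
`1 + max (n⁺(W)/n⁻(W)) (n⁻(W)/n⁺(W)) ≤ χ(G)`, where `n⁺(W)` and `n⁻(W)` are the numbers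
of positive and negative eigenvalues of `W` counted with multiplicity. -/
theorem inertial_bound_weighted {n : ℕ} (G : SimpleGraph (Fin n)) [DecidableRel G.Adj]
    (W : Matrix (Fin n) (Fin n) ℂ) (hW : W.IsHermitian)
    (hsupp : ∀ k l, G.adjMatrix ℂ k l = 0 → W k l = 0)
    (npos : ℕ) (hpos : npos = (Finset.univ.filter fun i => 0 < hW.eigenvalues i).card)
    (nneg : ℕ) (hneg : nneg = (Finset.univ.filter fun i => hW.eigenvalues i < 0).card)
    (hpos0 : npos ≠ 0) (hneg0 : nneg ≠ 0) :
    1 + max ((npos : ℝ) / (nneg : ℝ)) ((nneg : ℝ) / (npos : ℝ))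
      ≤ (G.chromaticNumber.toNat : ℝ) := by
  subst hpos hneg
  exact inertial_bound_weighted_general G hW
    (fun k l hkl => hsupp k l (by rw [G.adjMatrix_apply, if_neg hkl]))
    (by simpa [Finset.filter_nonempty_iff] using hpos0)
    (by simpa [Finset.filter_nonempty_iff] using hneg0)
end

section
/- Let G be a simple graph on n vertices and let Ḡ be its complement. Then n⁻(G) + n⁻(Ḡ) ≥ n − 1. -/
/-!
The adjacency matrices satisfy `A(G) + A(Ḡ) = J - I`, where `J` is the all-ones matrix, so the sum
of their quadratic forms is `-‖x‖²` on the hyperplane `∑ xᵢ = 0`. A vector of that hyperplane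
orthogonal to all eigenvectors of negative eigenvalue of both matrices makes both forms nonnegative
and hence vanishes; so these `n⁻(G) + n⁻(Ḡ)` linear conditions are injective on a space of
dimension at least `n - 1`.
-/

open Matrix

section NegIndex

variable {𝕜 ι : Type*} [RCLike 𝕜] [Fintype ι] [DecidableEq ι] {A B : Matrix ι ι 𝕜}

/-- `n⁻(A)`: the number of negative eigenvalues of a Hermitian matrix, counted with multiplicity.
This extends `SimpleGraph.negInertia` to arbitrary Hermitian matrices. -/
noncomputable def negIndex (hA : A.IsHermitian) : ℕ :=
  (Finset.univ.filter fun i => hA.eigenvalues i < 0).card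

/-- The coordinates of a vector in the eigenbasis of a Hermitian matrix that belong to negative
eigenvalues. Its kernel is the sum of the eigenspaces of nonnegative eigenvalue. -/
noncomputable def negEigencoords (hA : A.IsHermitian) :
    (ι → 𝕜) →ₗ[𝕜] ({i // hA.eigenvalues i < 0} → 𝕜) :=
  LinearMap.funLeft 𝕜 𝕜 Subtype.val ∘ₗ (star (hA.eigenvectorUnitary : Matrix ι ι 𝕜)).mulVecLin

lemma finrank_fun_neg_eigenvalues (hA : A.IsHermitian) :
    Module.finrank 𝕜 ({i // hA.eigenvalues i < 0} → 𝕜) = negIndex hA := by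
  rw [Module.finrank_fintype_fun_eq_card, Fintype.card_subtype, negIndex]

lemma star_dotProduct_mulVec_eq_sum_eigenvalues (hA : A.IsHermitian) (x : ι → 𝕜) :
    star x ⬝ᵥ A *ᵥ x = ((∑ i, hA.eigenvalues i *
      ‖(star (hA.eigenvectorUnitary : Matrix ι ι 𝕜) *ᵥ x) i‖ ^ 2 : ℝ) : 𝕜) := by
  set U := (hA.eigenvectorUnitary : Matrix ι ι 𝕜)
  set D : Matrix ι ι 𝕜 := diagonal (RCLike.ofReal ∘ hA.eigenvalues)
  have hspec : A = U * D * star U :=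
    hA.spectral_theorem.trans (Unitary.conjStarAlgAut_apply ..)
  calc star x ⬝ᵥ A *ᵥ x = star (star U *ᵥ x) ⬝ᵥ D *ᵥ (star U *ᵥ x) := by
        rw [hspec, ← mulVec_mulVec, ← mulVec_mulVec, dotProduct_mulVec, star_mulVec,
          star_eq_conjTranspose, conjTranspose_conjTranspose]
    _ = _ := by
        push_cast
        refine Finset.sum_congr rfl fun i _ => ?_
        rw [mulVec_diagonal, Pi.star_apply, mul_left_comm, ← starRingEnd_apply, RCLike.conj_mul,
          Function.comp_apply]

lemma re_star_dotProduct_mulVec_nonneg_of_negEigencoords (hA : A.IsHermitian)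
    {x : ι → 𝕜} (hx : negEigencoords hA x = 0) : 0 ≤ RCLike.re (star x ⬝ᵥ A *ᵥ x) := by
  rw [star_dotProduct_mulVec_eq_sum_eigenvalues hA, RCLike.ofReal_re]
  refine Finset.sum_nonneg fun i _ => ?_
  rcases lt_or_ge (hA.eigenvalues i) 0 with hneg | hnonneg
  · have hcoord : (star (hA.eigenvectorUnitary : Matrix ι ι 𝕜) *ᵥ x) i = 0 :=
      congrFun hx ⟨i, hneg⟩
    simp [hcoord]
  · positivity

lemma finrank_le_negIndex_add_negIndex (hA : A.IsHermitian) (hB : B.IsHermitian)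
    {W : Submodule 𝕜 (ι → 𝕜)}
    (hW : ∀ x ∈ W, x ≠ 0 → RCLike.re (star x ⬝ᵥ (A + B) *ᵥ x) < 0) :
    Module.finrank 𝕜 W ≤ negIndex hA + negIndex hB := by
  have hinj : Function.Injective
      (((negEigencoords hA).prod (negEigencoords hB)).domRestrict W) := by
    rw [injective_iff_map_eq_zero]
    rintro ⟨x, hxW⟩ hx
    obtain ⟨hxA, hxB⟩ : negEigencoords hA x = 0 ∧ negEigencoords hB x = 0 := Prod.mk.inj hx
    by_contra hne
    have hneg := hW x hxW fun h => hne (Subtype.ext h)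
    rw [add_mulVec, dotProduct_add, map_add] at hneg
    have hnonnegA := re_star_dotProduct_mulVec_nonneg_of_negEigencoords hA hxA
    have hnonnegB := re_star_dotProduct_mulVec_nonneg_of_negEigencoords hB hxB
    linarith
  have hdim := LinearMap.finrank_le_finrank_of_injective hinj
  rwa [Module.finrank_prod, finrank_fun_neg_eigenvalues, finrank_fun_neg_eigenvalues] at hdim

end NegIndex

lemma finrank_le_finrank_ker_add_one {K E : Type*} [DivisionRing K] [AddCommGroup E]
    [Module K E] [FiniteDimensional K E] (f : E →ₗ[K] K) :
    Module.finrank K E ≤ Module.finrank K (LinearMap.ker f) + 1 := by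
  have hrange : Module.finrank K (LinearMap.range f) ≤ 1 :=
    (Submodule.finrank_le _).trans_eq (Module.finrank_self K)
  have hsum := f.finrank_range_add_finrank_ker
  omega

section Graph

variable {V : Type*} (G : SimpleGraph V) [DecidableRel G.Adj]

lemma isHermitian_adjMatrix (R : Type*) [NonAssocSemiring R] [StarRing R] :
    (G.adjMatrix R).IsHermitian := by
  ext i j
  simp [SimpleGraph.adjMatrix_apply, apply_ite star, G.adj_comm]

variable [Fintype V] [DecidableRel Gᶜ.Adj]

lemma dotProduct_adjMatrix_add_compl_mulVec {R : Type*} [NonAssocRing R] (x y : V → R) :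
    x ⬝ᵥ (G.adjMatrix R + Gᶜ.adjMatrix R) *ᵥ y = (∑ i, x i) * (∑ i, y i) - x ⬝ᵥ y := by
  classical
  have hsum : G.adjMatrix R + Gᶜ.adjMatrix R = Matrix.of 1 - 1 := by
    rw [SimpleGraph.IsCompl.adjMatrix_add_adjMatrix_eq_adjMatrix_completeGraph R isCompl_compl,
      SimpleGraph.adjMatrix_completeGraph_eq_of_one_sub_one]
  have hones : x ⬝ᵥ Matrix.of 1 *ᵥ y = (∑ i, x i) * (∑ i, y i) := by
    simp [dotProduct, mulVec, Finset.sum_mul]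
  rw [hsum, sub_mulVec, dotProduct_sub, hones, one_mulVec]

theorem negInertia_add_compl_ge_general [DecidableEq V] :
    Fintype.card V - 1 ≤
      negIndex (isHermitian_adjMatrix G ℝ) + negIndex (isHermitian_adjMatrix Gᶜ ℝ) := by
  let coordSum : (V → ℝ) →ₗ[ℝ] ℝ := ∑ i, LinearMap.proj i
  have hneg : ∀ x ∈ LinearMap.ker coordSum, x ≠ 0 →
      RCLike.re (star x ⬝ᵥ (G.adjMatrix ℝ + Gᶜ.adjMatrix ℝ) *ᵥ x) < 0 := by
    intro x hx hne
    have hsum : ∑ i, x i = 0 := by simpa [coordSum] using hx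
    have hpos : 0 < x ⬝ᵥ x := by simpa using dotProduct_star_self_pos_iff.mpr hne
    simpa [dotProduct_adjMatrix_add_compl_mulVec, hsum] using hpos
  have hker := finrank_le_finrank_ker_add_one coordSum
  rw [Module.finrank_fintype_fun_eq_card] at hker
  have hdim := finrank_le_negIndex_add_negIndex (isHermitian_adjMatrix G ℝ)
    (isHermitian_adjMatrix Gᶜ ℝ) hneg
  omega

end Graph

/-- **Nordhaus–Gaddum for `n⁻`.** For any graph `G` on `n` vertices,
`n⁻(G) + n⁻(Ḡ) ≥ n - 1`. -/
theorem negInertia_add_compl_ge {n : ℕ} (G : SimpleGraph (Fin n)) :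
    n - 1 ≤ G.negInertia + Gᶜ.negInertia := by
  let _ := Classical.decRel G.Adj
  let _ := Classical.decRel Gᶜ.Adj
  simpa only [Fintype.card_fin] using! negInertia_add_compl_ge_general G
end

section
/- Let G be a simple graph on n vertices with adjacency eigenvalues μ₁ ≥ … ≥ μ_n, and let j denote the number of indices i with −1 < μ_i < 0. Then n⁻(Ḡ) ≥ n⁺(G) + n⁰(G) + j − 1; equivalently, n⁻(Ḡ) ≥ #{i : μ_i > −1} − 1. -/
/-!
The adjacency matrices of `G` and `Gᶜ` satisfy `A + B + 1 = J`, where the all-ones matrix `J` has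
rank at most one. On a nonzero vector of `ker J` in the span of the eigenvectors of `A` with
eigenvalue `> -1`, the quadratic form of `A` exceeds `-‖x‖²`, so that of `B` is negative. This
subspace, of codimension at most one in the span, therefore meets the span of the eigenvectors of
`B` with nonnegative eigenvalue trivially, and its dimension is at most the number of negative
eigenvalues of `B`.
-/

open Matrix

open Finset Module
open scoped InnerProductSpace

lemma finrank_le_finrank_inf_ker_add_finrank_range {K M N : Type*} [DivisionRing K]
    [AddCommGroup M] [Module K M] [FiniteDimensional K M] [AddCommGroup N] [Module K N]
    (U : Submodule K M) (f : M →ₗ[K] N) :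
    finrank K U ≤
      finrank K (U ⊓ LinearMap.ker f : Submodule K M) + finrank K (LinearMap.range f) := by
  have hsup := (U ⊔ LinearMap.ker f).finrank_le
  have hinf := Submodule.finrank_sup_add_finrank_inf_eq U (LinearMap.ker f)
  have hrank := f.finrank_range_add_finrank_ker
  lia

lemma finrank_span_image_setOf_eq_card {K M ι : Type*} [Ring K] [StrongRankCondition K]
    [Nontrivial K] [AddCommGroup M] [Module K M] [Fintype ι] {v : ι → M}
    (hv : LinearIndependent K v) (p : ι → Prop) [DecidablePred p] :
    finrank K (Submodule.span K (v '' {i | p i})) = #{i | p i} := by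
  rw [Set.image_eq_range, ← Fintype.card_subtype]
  exact finrank_span_eq_card (hv.comp _ Subtype.val_injective)

section OrthonormalEigenbasis

variable {𝕜 E ι κ : Type*} [RCLike 𝕜] [NormedAddCommGroup E] [InnerProductSpace 𝕜 E]

lemma inner_eq_zero_of_mem_span_image {v : ι → E} (hv : Orthonormal 𝕜 v) {s : Set ι} {x : E}
    (hx : x ∈ Submodule.span 𝕜 (v '' s)) {i : ι} (hi : i ∉ s) : ⟪v i, x⟫_𝕜 = 0 := by
  obtain ⟨l, hl, rfl⟩ := (Finsupp.mem_span_image_iff_linearCombination 𝕜).mp hx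
  exact inner_eq_zero_symm.mp (hv.inner_finsupp_eq_zero hi hl)

variable [Fintype ι] [Fintype κ] {T : E →ₗ[𝕜] E} {b : OrthonormalBasis ι 𝕜 E} {μ : ι → ℝ}

lemma re_inner_map_self_eq_sum (hT : ∀ i, T (b i) = (μ i : 𝕜) • b i) (x : E) :
    RCLike.re ⟪x, T x⟫_𝕜 = ∑ i, μ i * ‖⟪b i, x⟫_𝕜‖ ^ 2 := by
  have hTx : T x = ∑ i, (μ i * ⟪b i, x⟫_𝕜) • b i := by
    conv_lhs => rw [← b.sum_repr' x]
    simp only [map_sum, map_smul, hT, smul_smul, mul_comm]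
  rw [hTx, inner_sum, map_sum]
  refine sum_congr rfl fun i _ ↦ ?_
  rw [inner_smul_right, mul_assoc, RCLike.re_ofReal_mul, inner_mul_symm_re_eq_norm, norm_mul,
    norm_inner_symm x, sq]

lemma mul_norm_sq_le_re_inner_map_self (hT : ∀ i, T (b i) = (μ i : 𝕜) • b i) {c : ℝ} {x : E}
    (hx : x ∈ Submodule.span 𝕜 (b '' {i | c ≤ μ i})) : c * ‖x‖ ^ 2 ≤ RCLike.re ⟪x, T x⟫_𝕜 := by
  rw [re_inner_map_self_eq_sum hT, ← b.sum_sq_norm_inner_right x, mul_sum]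
  refine sum_le_sum fun i _ ↦ ?_
  by_cases hi : c ≤ μ i
  · gcongr
  · simp [inner_eq_zero_of_mem_span_image b.orthonormal hx hi]

lemma mul_norm_sq_lt_re_inner_map_self (hT : ∀ i, T (b i) = (μ i : 𝕜) • b i) {c : ℝ} {x : E}
    (hx : x ∈ Submodule.span 𝕜 (b '' {i | c < μ i})) (hx₀ : x ≠ 0) :
    c * ‖x‖ ^ 2 < RCLike.re ⟪x, T x⟫_𝕜 := by
  have hlt {i : ι} (hi : ⟪b i, x⟫_𝕜 ≠ 0) : c * ‖⟪b i, x⟫_𝕜‖ ^ 2 < μ i * ‖⟪b i, x⟫_𝕜‖ ^ 2 := by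
    have : c < μ i := by
      contrapose hi
      exact inner_eq_zero_of_mem_span_image b.orthonormal hx hi
    gcongr
  obtain ⟨k, hk⟩ : ∃ k, ⟪b k, x⟫_𝕜 ≠ 0 := by
    contrapose! hx₀
    rw [← b.sum_repr' x]
    simp [hx₀]
  rw [re_inner_map_self_eq_sum hT, ← b.sum_sq_norm_inner_right x, mul_sum]
  refine sum_lt_sum (fun i _ ↦ ?_) ⟨k, mem_univ k, hlt hk⟩
  by_cases hi : ⟪b i, x⟫_𝕜 = 0
  · simp [hi]
  · exact (hlt hi).le

-- One half of the Courant–Fischer min-max principle.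
lemma finrank_le_card_eigenvalues_lt (hT : ∀ i, T (b i) = (μ i : 𝕜) • b i) {c : ℝ}
    {V : Submodule 𝕜 E} (hV : ∀ x ∈ V, x ≠ 0 → RCLike.re ⟪x, T x⟫_𝕜 < c * ‖x‖ ^ 2) :
    finrank 𝕜 V ≤ #{i | μ i < c} := by
  have : FiniteDimensional 𝕜 E := b.toBasis.finiteDimensional_of_finite
  let W := Submodule.span 𝕜 (b '' {i | c ≤ μ i})
  have hVW : Disjoint V W := by
    rw [Submodule.disjoint_def]
    intro x hxV hxW
    by_contra hx
    exact (hV x hxV hx).not_ge (mul_norm_sq_le_re_inner_map_self hT hxW)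
  have hW : finrank 𝕜 W = #{i | c ≤ μ i} :=
    finrank_span_image_setOf_eq_card b.orthonormal.linearIndependent _
  have hdim := Submodule.finrank_add_finrank_le_of_disjoint hVW
  have hcard := card_filter_add_card_filter_not (s := univ) (fun i ↦ μ i < c)
  simp only [not_lt, card_univ] at hcard
  rw [hW, finrank_eq_card_basis b.toBasis] at hdim
  lia

/-- A rank-perturbation form of Weyl's inequalities. -/
theorem card_lt_eigenvalues_le_card_eigenvalues_lt_add_finrank_range {S : E →ₗ[𝕜] E}
    {u : OrthonormalBasis κ 𝕜 E} {ν : κ → ℝ} (hT : ∀ i, T (b i) = (μ i : 𝕜) • b i)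
    (hS : ∀ j, S (u j) = (ν j : 𝕜) • u j) (c d : ℝ) :
    #{i | c < μ i} ≤
      #{j | ν j < d} + finrank 𝕜 (LinearMap.range (T + S - ((c + d : ℝ) : 𝕜) • 1)) := by
  have : FiniteDimensional 𝕜 E := b.toBasis.finiteDimensional_of_finite
  let R := T + S - ((c + d : ℝ) : 𝕜) • 1
  let U := Submodule.span 𝕜 (b '' {i | c < μ i})
  have hU : finrank 𝕜 U = #{i | c < μ i} :=
    finrank_span_image_setOf_eq_card b.orthonormal.linearIndependent _
  have hform : ∀ x ∈ U ⊓ LinearMap.ker R, x ≠ 0 → RCLike.re ⟪x, S x⟫_𝕜 < d * ‖x‖ ^ 2 := by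
    rintro x ⟨hxU, hxR⟩ hx
    have hTx := mul_norm_sq_lt_re_inner_map_self hT hxU hx
    have hsum : RCLike.re ⟪x, T x⟫_𝕜 + RCLike.re ⟪x, S x⟫_𝕜 = (c + d) * ‖x‖ ^ 2 := by
      have hTS : T x + S x = ((c + d : ℝ) : 𝕜) • x := sub_eq_zero.mp hxR
      rw [← map_add, ← inner_add_right, hTS, inner_smul_right, RCLike.re_ofReal_mul,
        inner_self_eq_norm_sq]
    linarith
  calc #{i | c < μ i} = finrank 𝕜 U := hU.symm
    _ ≤ finrank 𝕜 (U ⊓ LinearMap.ker R : Submodule 𝕜 E) + finrank 𝕜 (LinearMap.range R) :=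
      finrank_le_finrank_inf_ker_add_finrank_range U R
    _ ≤ #{j | ν j < d} + finrank 𝕜 (LinearMap.range R) := by
      gcongr
      exact finrank_le_card_eigenvalues_lt hS hform

end OrthonormalEigenbasis

section Matrix

variable {𝕜 n : Type*} [RCLike 𝕜] [Fintype n] [DecidableEq n] {A B : Matrix n n 𝕜}

lemma toEuclideanLin_eigenvectorBasis (hA : A.IsHermitian) (i : n) :
    toEuclideanLin A (hA.eigenvectorBasis i) =
      (hA.eigenvalues i : 𝕜) • hA.eigenvectorBasis i := by
  rw [toLpLin_apply, hA.mulVec_eigenvectorBasis, RCLike.real_smul_eq_coe_smul (K := 𝕜)]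
  rfl

theorem card_lt_eigenvalues_le_card_eigenvalues_lt_add_rank (hA : A.IsHermitian)
    (hB : B.IsHermitian) (c d : ℝ) :
    #{i | c < hA.eigenvalues i} ≤
      #{i | hB.eigenvalues i < d} + (A + B - ((c + d : ℝ) : 𝕜) • 1).rank := by
  rw [rank_eq_finrank_range_toLin _ (EuclideanSpace.basisFun n 𝕜).toBasis
    (EuclideanSpace.basisFun n 𝕜).toBasis, ← toEuclideanLin_eq_toLin_orthonormal, map_sub, map_add,
    map_smul, toLpLin_one]
  exact card_lt_eigenvalues_le_card_eigenvalues_lt_add_finrank_range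
    (toEuclideanLin_eigenvectorBasis hA) (toEuclideanLin_eigenvectorBasis hB) c d

end Matrix

lemma rank_of_one_le_one {m n R : Type*} [Fintype n] [CommSemiring R] [StrongRankCondition R] :
    (of 1 : Matrix m n R).rank ≤ 1 := by
  have : (of 1 : Matrix m n R) = vecMulVec 1 1 := by
    ext
    simp [vecMulVec_apply]
  rw [this]
  exact rank_vecMulVec_le 1 1

lemma card_lt_add_card_eq_add_card_between {ι α : Type*} [Fintype ι] [LinearOrder α] (f : ι → α)
    {a b : α} (hab : a < b) :
    #{i | b < f i} + #{i | f i = b} + #{i | a < f i ∧ f i < b} = #{i | a < f i} := by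
  simp only [card_filter, ← sum_add_distrib]
  refine sum_congr rfl fun i _ ↦ ?_
  grind

section Graph

variable {V : Type*} [Fintype V] [DecidableEq V] (G : SimpleGraph V) [DecidableRel G.Adj]

theorem card_neg_one_lt_eigenvalues_le_card_eigenvalues_compl_neg_add_one :
    #{v | -1 < (G.isHermitian_adjMatrix ℝ).eigenvalues v} ≤
      #{v | (Gᶜ.isHermitian_adjMatrix ℝ).eigenvalues v < 0} + 1 := by
  have hJ : G.adjMatrix ℝ + Gᶜ.adjMatrix ℝ - ((-1 + 0 : ℝ) : ℝ) • 1 = of 1 := by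
    rw [← G.one_add_adjMatrix_add_compl_adjMatrix_eq_of_one ℝ,
      G.compl_adjMatrix_eq_adjMatrix_compl ℝ]
    module
  grw [card_lt_eigenvalues_le_card_eigenvalues_lt_add_rank (G.isHermitian_adjMatrix ℝ)
    (Gᶜ.isHermitian_adjMatrix ℝ) (-1) 0]
  gcongr
  exact hJ ▸ rank_of_one_le_one

theorem negInertia_compl_ge_general :
    #{v | 0 < (G.isHermitian_adjMatrix ℝ).eigenvalues v} +
        #{v | (G.isHermitian_adjMatrix ℝ).eigenvalues v = 0} +
        #{v | -1 < (G.isHermitian_adjMatrix ℝ).eigenvalues v ∧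
          (G.isHermitian_adjMatrix ℝ).eigenvalues v < 0} - 1 ≤
      #{v | (Gᶜ.isHermitian_adjMatrix ℝ).eigenvalues v < 0} := by
  rw [card_lt_add_card_eq_add_card_between _ neg_one_lt_zero, tsub_le_iff_right]
  exact card_neg_one_lt_eigenvalues_le_card_eigenvalues_compl_neg_add_one G

end Graph

/-- For a graph `G` on `n` vertices, letting `j` be the number of adjacency eigenvalues
`μ` of `G` (with multiplicity) satisfying `-1 < μ < 0`, we have
`n⁻(Ḡ) ≥ n⁺(G) + n⁰(G) + j - 1`. -/
theorem negInertia_compl_ge {n : ℕ} (G : SimpleGraph (Fin n)) [DecidableRel G.Adj]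
    (j : ℕ)
    (hj : j = (Finset.univ.filter fun i =>
      -1 < G.adjMatrix_isHermitian.eigenvalues i ∧
        G.adjMatrix_isHermitian.eigenvalues i < 0).card) :
    G.posInertia + G.zeroInertia + j - 1 ≤ Gᶜ.negInertia := by
  unfold SimpleGraph.posInertia SimpleGraph.zeroInertia SimpleGraph.negInertia
  convert! negInertia_compl_ge_general G
end
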